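/- Let f satisfy conditions (f.1)–(f.3) (measurability in t, local Lipschitz continuity in x, and linear growth ‖f(t,x)‖ ≤ (1+‖x‖)c_f). Then there exists L > 0 such that for every x₀ ∈ B(R₀) and every h > 0, the unique solution y(·) of the retarded functional-differential Cauchy problem ẏ(t) = f(t, x₀ + h^{α−1}(Δ_h^{1−α} y)(t)) a.e. on [0,T], y(0) = 0, is Lipschitz continuous with constant L, where one may take L = a E_α(aT^α) with a = max{1+R₀, ‖p_{1−α}‖₁} c_f and E_α the Mittag-Leffler function. -/

import Mathlib

open MeasureTheory Set Real RealInnerProductSpace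

noncomputable section

abbrev Evec (n : ℕ) := EuclideanSpace ℝ (Fin n)

/-- Generalized binomial coefficient `binom a j`. -/
def binomR (a : ℝ) (j : ℕ) : ℝ :=
  (∏ i ∈ Finset.range j, (a - (i : ℝ))) / (Nat.factorial j : ℝ)

/-- Left-sided Riemann–Liouville fractional integral of order `α` with base point `0`. -/
def RLint {E : Type*} [NormedAddCommGroup E] [NormedSpace ℝ E]
    (α : ℝ) (f : ℝ → E) (t : ℝ) : E :=
  (Real.Gamma α)⁻¹ • ∫ τ in (0:ℝ)..t, ((t - τ) ^ (α - 1) : ℝ) • f τ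

/-- Left-sided Riemann–Liouville fractional derivative of order `α` with base point `0`. -/
def RLderiv {E : Type*} [NormedAddCommGroup E] [NormedSpace ℝ E]
    (α : ℝ) (x : ℝ → E) (t : ℝ) : E :=
  deriv (fun s => (Real.Gamma (1 - α))⁻¹ • ∫ τ in (0:ℝ)..s, ((s - τ) ^ (-α) : ℝ) • x τ) t

/-- Caputo fractional derivative of order `α` with base point `0`. -/
def CapDeriv {E : Type*} [NormedAddCommGroup E] [NormedSpace ℝ E]
    (α : ℝ) (x : ℝ → E) (t : ℝ) : E :=
  RLderiv α (fun s => x s - x 0) t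

/-- Grünwald–Letnikov fractional difference of order `α` with step `h`. -/
def GLdiff {E : Type*} [NormedAddCommGroup E] [NormedSpace ℝ E]
    (α h : ℝ) (x : ℝ → E) (t : ℝ) : E :=
  ∑ j ∈ Finset.range (⌊t / h⌋₊ + 1), ((-1 : ℝ) ^ j * binomR α j) • x (t - (j : ℝ) * h)

/-- The kernel `p_α`. -/
def pker (α : ℝ) (τ : ℝ) : ℝ :=
  (Real.Gamma α)⁻¹ * ∑ j ∈ Finset.range ⌈τ⌉₊, (-1 : ℝ) ^ j * binomR α j * ((τ - (j : ℝ)) ^ (α - 1) : ℝ)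

/-- Mittag-Leffler function `E_α`. -/
def mittagLeffler (α z : ℝ) : ℝ := ∑' k : ℕ, z ^ k / Real.Gamma (α * (k : ℝ) + 1)

/-- `x` is a solution of the Caputo Cauchy problem `(^C D^α x)(t) = f(t, x(t))`, `x 0 = x₀`. -/
def IsCaputoSol (α T : ℝ) {n : ℕ} (f : ℝ → Evec n → Evec n) (x₀ : Evec n)
    (x : ℝ → Evec n) : Prop :=
  (∃ φ : ℝ → Evec n, Measurable φ ∧
    (∃ C : ℝ, ∀ᵐ t ∂volume.restrict (Icc (0:ℝ) T), ‖φ t‖ ≤ C) ∧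
    ∀ t ∈ Icc (0:ℝ) T, x t = x₀ + RLint α φ t) ∧
  ∀ᵐ t ∂volume.restrict (Icc (0:ℝ) T), CapDeriv α x t = f t (x t)

/-- `y` is a solution of the approximating retarded functional-differential Cauchy problem. -/
def IsApproxSol (α T h : ℝ) {n : ℕ} (f : ℝ → Evec n → Evec n) (x₀ : Evec n)
    (y : ℝ → Evec n) : Prop :=
  (∃ Ly : NNReal, LipschitzOnWith Ly y (Icc (0:ℝ) T)) ∧ y 0 = 0 ∧
  ∀ᵐ t ∂volume.restrict (Icc (0:ℝ) T),
    HasDerivAt y (f t (x₀ + ((h ^ (α - 1) : ℝ)) • GLdiff (1 - α) h y t)) t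

/-- `x` is a motion of the conflict-controlled Caputo system for realizations `u`, `v`. -/
def IsCtrlSol (α T : ℝ) {n nu nv : ℕ}
    (g : ℝ → Evec n → Evec nu → Evec nv → Evec n) (x₀ : Evec n)
    (u : ℝ → Evec nu) (v : ℝ → Evec nv) (x : ℝ → Evec n) : Prop :=
  (∃ φ : ℝ → Evec n, Measurable φ ∧
    (∃ C : ℝ, ∀ᵐ t ∂volume.restrict (Icc (0:ℝ) T), ‖φ t‖ ≤ C) ∧
    ∀ t ∈ Icc (0:ℝ) T, x t = x₀ + RLint α φ t) ∧
  ∀ᵐ t ∂volume.restrict (Icc (0:ℝ) T), CapDeriv α x t = g t (x t) (u t) (v t)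

/-- `y` is a motion of the approximating conflict-controlled system for realizations `ũ`, `ṽ`. -/
def IsCtrlApproxSol (α T h : ℝ) {n nu nv : ℕ}
    (g : ℝ → Evec n → Evec nu → Evec nv → Evec n) (x₀ : Evec n)
    (ut : ℝ → Evec nu) (vt : ℝ → Evec nv) (y : ℝ → Evec n) : Prop :=
  (∃ Ly : NNReal, LipschitzOnWith Ly y (Icc (0:ℝ) T)) ∧ y 0 = 0 ∧
  ∀ᵐ t ∂volume.restrict (Icc (0:ℝ) T),
    HasDerivAt y (g t (x₀ + ((h ^ (α - 1) : ℝ)) • GLdiff (1 - α) h y t) (ut t) (vt t)) t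


/-- Partial sums of the Grünwald–Letnikov weights. -/
def sW (b : ℝ) (k : ℕ) : ℝ := ∏ i ∈ Finset.range k, (1 - b / ((i : ℝ) + 1))

lemma sW_succ (b : ℝ) (k : ℕ) : sW b (k + 1) = sW b k * (1 - b / ((k : ℝ) + 1)) := by
  simp [sW, Finset.prod_range_succ]

lemma w_zero (b : ℝ) : (-1 : ℝ) ^ 0 * binomR b 0 = sW b 0 := by
  simp [binomR, sW]

lemma binomR_succ (b : ℝ) (k : ℕ) : binomR b (k + 1) = binomR b k * (b - k) / ((k : ℝ) + 1) := by
  have h1 : ((Nat.factorial k : ℕ) : ℝ) ≠ 0 := by positivity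
  have h2 : ((k : ℝ) + 1) ≠ 0 := by positivity
  simp only [binomR, Finset.prod_range_succ, Nat.factorial_succ]
  push_cast
  field_simp

lemma w_succ_aux (b : ℝ) (k : ℕ) :
    (-1 : ℝ) ^ (k + 1) * binomR b (k + 1) = - (b / ((k : ℝ) + 1)) * sW b k := by
  induction k with
  | zero => simp [binomR, sW]
  | succ k ih =>
    have h2 : ((k : ℝ) + 1) ≠ 0 := by positivity
    have h3 : ((k : ℝ) + 1 + 1) ≠ 0 := by positivity
    have : (-1 : ℝ) ^ (k + 1 + 1) * binomR b (k + 1 + 1)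
        = ((-1 : ℝ) ^ (k + 1) * binomR b (k + 1)) * (((k : ℝ) + 1) - b) / ((k : ℝ) + 1 + 1) := by
      rw [binomR_succ b (k + 1)]
      push_cast
      ring
    rw [this, ih, sW_succ]
    push_cast
    field_simp

lemma w_succ (b : ℝ) (k : ℕ) :
    (-1 : ℝ) ^ (k + 1) * binomR b (k + 1) = sW b (k + 1) - sW b k := by
  rw [w_succ_aux, sW_succ]; ring

lemma sW_nonneg {b : ℝ} (hb : b ≤ 1) (k : ℕ) : 0 ≤ sW b k := by
  unfold sW
  apply Finset.prod_nonneg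
  intro i _
  have : (0 : ℝ) < (i : ℝ) + 1 := by positivity
  have h2 : b / ((i : ℝ) + 1) ≤ 1 := by
    rw [div_le_one this]
    have : (0 : ℝ) ≤ i := by positivity
    linarith
  linarith

lemma sW_le {b : ℝ} (hb0 : 0 ≤ b) (hb : b ≤ 1) (k : ℕ) : sW b k ≤ ((k : ℝ) + 1) ^ (-b) := by
  induction k with
  | zero => simp [sW]
  | succ k ih =>
    rw [sW_succ]
    have hk : (0 : ℝ) < (k : ℝ) + 1 := by positivity
    have h1 : (1 + 1 / ((k : ℝ) + 1)) ^ b ≤ 1 + b * (1 / ((k : ℝ) + 1)) :=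
      rpow_one_add_le_one_add_mul_self (by have : 0 < 1 / ((k : ℝ) + 1) := by positivity
                                           linarith) hb0 hb
    have h0 : 0 ≤ 1 - b / ((k : ℝ) + 1) := by
      have h2 : b / ((k : ℝ) + 1) ≤ 1 := by
        rw [div_le_one hk]
        have : (0 : ℝ) ≤ k := by positivity
        linarith
      linarith
    have hp : (0 : ℝ) < (1 + 1 / ((k : ℝ) + 1)) ^ b := by positivity
    have h2 : 1 - b / ((k : ℝ) + 1) ≤ (1 + 1 / ((k : ℝ) + 1)) ^ (-b) := by
      rw [Real.rpow_neg (by positivity), ← one_div, le_div_iff₀ hp]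
      have := mul_le_mul_of_nonneg_left h1 h0
      have h3 : (1 - b / ((k : ℝ) + 1)) * (1 + b * (1 / ((k : ℝ) + 1)))
        = 1 - (b / ((k : ℝ) + 1)) ^ 2 := by ring
      nlinarith [sq_nonneg (b / ((k : ℝ) + 1))]
    calc sW b k * (1 - b / ((k : ℝ) + 1))
        ≤ ((k : ℝ) + 1) ^ (-b) * (1 + 1 / ((k : ℝ) + 1)) ^ (-b) :=
          mul_le_mul ih h2 h0 (by positivity)
      _ = (((k + 1 : ℕ) : ℝ) + 1) ^ (-b) := by
          rw [← Real.mul_rpow (by positivity) (by positivity)]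
          congr 1
          push_cast
          field_simp

lemma abel_sum {E : Type*} [AddCommGroup E] [Module ℝ E] (b : ℝ) (Y : ℕ → E) (N : ℕ) :
    ∑ j ∈ Finset.range (N + 1), ((-1 : ℝ) ^ j * binomR b j) • Y j
      = ∑ k ∈ Finset.range N, sW b k • (Y k - Y (k + 1)) + sW b N • Y N := by
  induction N with
  | zero => simp [binomR, sW]
  | succ N ih =>
    rw [Finset.sum_range_succ, ih, Finset.sum_range_succ, w_succ]
    module

lemma lip_int {n : ℕ} {y : ℝ → Evec n} {T : ℝ} {K : NNReal}
    (hy : LipschitzOnWith K y (Icc 0 T)) {g : ℝ → ℝ} (hg : Continuous g)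
    (hd : ∀ᵐ t ∂volume.restrict (Icc (0:ℝ) T), ∃ v, HasDerivAt y v t ∧ ‖v‖ ≤ g t)
    {u v : ℝ} (hu : 0 ≤ u) (huv : u ≤ v) (hv : v ≤ T) :
    ‖y v - y u‖ ≤ ∫ τ in u..v, g τ := by
  set d := y v - y u with hdd
  have hsub : uIcc u v ⊆ Icc 0 T := by
    rw [uIcc_of_le huv]; exact Icc_subset_Icc hu hv
  have hac : AbsolutelyContinuousOnInterval (fun t => inner ℝ d (y t)) u v := by
    have := ((innerSL ℝ d).lipschitz.comp_lipschitzOnWith (hy.mono hsub))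
    exact this.absolutelyContinuousOnInterval
  have h1 := hac.integral_deriv_eq_sub
  have h2 : ‖∫ t in u..v, deriv (fun t => inner ℝ d (y t)) t‖ ≤ ∫ t in u..v, ‖d‖ * g t := by
    apply intervalIntegral.norm_integral_le_of_norm_le huv
    · rw [ae_restrict_iff' measurableSet_Icc] at hd
      filter_upwards [hd] with t ht htm
      obtain ⟨w, hw, hwg⟩ := ht ⟨by linarith [htm.1], by linarith [htm.2]⟩
      have h3 : HasDerivAt (fun t => inner ℝ d (y t)) (inner ℝ d (w)) t := by
        have := (innerSL ℝ d).hasFDerivAt.comp_hasDerivAt t hw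
        exact this
      rw [h3.deriv]
      exact (norm_inner_le_norm d w).trans (by gcongr)
    · exact (by fun_prop : Continuous fun t => ‖d‖ * g t).intervalIntegrable _ _
  rw [h1, ← inner_sub_right, ← hdd, real_inner_self_eq_norm_sq, intervalIntegral.integral_const_mul,
    Real.norm_of_nonneg (by positivity), sq] at h2
  by_cases hz : ‖d‖ = 0
  · have hnn : 0 ≤ ∫ τ in u..v, g τ := by
      rw [intervalIntegral.integral_of_le huv]
      apply integral_nonneg_of_ae
      have hd' := ae_restrict_of_ae_restrict_of_subset
        (show Ioc u v ⊆ Icc 0 T from fun t ht => ⟨by linarith [ht.1], by linarith [ht.2]⟩) hd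
      filter_upwards [hd'] with t ht
      obtain ⟨w, _, hw⟩ := ht
      exact (norm_nonneg w).trans hw
    rw [hz]; exact hnn
  · exact le_of_mul_le_mul_left h2 (lt_of_le_of_ne (norm_nonneg _) (Ne.symm hz))

lemma kint {α l t : ℝ} (hα : 0 < α) (u v : ℝ) :
    IntervalIntegrable (fun τ => (t - τ) ^ (α - 1) * exp (l * τ)) volume u v := by
  apply IntervalIntegrable.mul_continuousOn
  · have := (intervalIntegral.intervalIntegrable_rpow' (a := t - u) (b := t - v)
      (r := α - 1) (by linarith))
    simpa using this.comp_sub_left t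
  · fun_prop

lemma kbound {α l t : ℝ} (hα : 0 < α) (hl : 0 < l) (ht : 0 ≤ t) :
    ∫ τ in (0:ℝ)..t, (t - τ) ^ (α - 1) * exp (l * τ)
      ≤ exp (l * t) * ((1 / l) ^ α * Real.Gamma α) := by
  have h1 : ∫ τ in (0:ℝ)..t, (t - τ) ^ (α - 1) * exp (l * τ)
      = ∫ τ in (0:ℝ)..t, exp (l * t) * (τ ^ (α - 1) * exp (-(l * τ))) := by
    have := intervalIntegral.integral_comp_sub_left (a := 0) (b := t)
      (fun τ => exp (l * t) * (τ ^ (α - 1) * exp (-(l * τ)))) t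
    simp only [sub_self, sub_zero] at this
    rw [← this]
    congr 1
    ext τ
    rw [mul_left_comm, ← Real.exp_add]
    congr 2
    ring
  have hG := Real.integral_rpow_mul_exp_neg_mul_Ioi hα hl
  have hpos : 0 < (1 / l) ^ α * Real.Gamma α := by
    have := Real.Gamma_pos_of_pos hα
    positivity
  have hint : IntegrableOn (fun τ : ℝ => τ ^ (α - 1) * exp (-(l * τ))) (Ioi 0) := by
    by_contra hc
    have := integral_undef hc
    rw [hG] at this
    linarith
  rw [h1, intervalIntegral.integral_const_mul, ← hG, intervalIntegral.integral_of_le ht]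
  refine mul_le_mul_of_nonneg_left ?_ (Real.exp_pos _).le
  apply setIntegral_mono_set hint
  · filter_upwards [ae_restrict_mem measurableSet_Ioi] with τ hτ
    have : (0:ℝ) < τ := hτ
    simp only [Pi.zero_apply]
    positivity
  · exact (Ioc_subset_Ioi_self).eventuallyLE

lemma seg {α l t h u v : ℝ} {k : ℕ} (hα : α ∈ Ioo (0:ℝ) 1) (hh : 0 < h)
    (huv : u ≤ v) (hv : v ≤ t) (hu : t - u ≤ ((k : ℝ) + 1) * h) :
    h ^ (α - 1) * sW (1 - α) k * ∫ τ in u..v, exp (l * τ)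
      ≤ ∫ τ in u..v, (t - τ) ^ (α - 1) * exp (l * τ) := by
  rw [← intervalIntegral.integral_const_mul]
  apply intervalIntegral.integral_mono_on_of_le_Ioo huv
  · exact (by fun_prop : Continuous fun τ => h ^ (α - 1) * sW (1 - α) k * exp (l * τ)).intervalIntegrable _ _
  · exact kint hα.1 u v
  · intro τ hτ
    have h1 := sW_le (b := 1 - α) (by linarith [hα.2]) (by linarith [hα.1]) k
    gcongr
    calc h ^ (α - 1) * sW (1 - α) k ≤ h ^ (α - 1) * ((k : ℝ) + 1) ^ (-(1 - α)) := by gcongr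
      _ = (((k : ℝ) + 1) * h) ^ (α - 1) := by
        rw [Real.mul_rpow (by positivity) hh.le, neg_sub, mul_comm]
      _ ≤ (t - τ) ^ (α - 1) := by
        apply Real.rpow_le_rpow_of_nonpos (by linarith [hτ.2]) (by linarith [hτ.1]) (by linarith [hα.2])

lemma GL_bound {n : ℕ} {y : ℝ → Evec n} {α l h T G t : ℝ} (hα : α ∈ Ioo (0:ℝ) 1)
    (hl : 0 < l) (hh : 0 < h) (hG : 0 ≤ G) (hy0 : y 0 = 0)
    (hP : ∀ u v, 0 ≤ u → u ≤ v → v ≤ T → ‖y v - y u‖ ≤ G * ∫ τ in u..v, exp (l * τ))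
    (ht0 : 0 ≤ t) (htT : t ≤ T) :
    ‖(h ^ (α - 1) : ℝ) • GLdiff (1 - α) h y t‖
      ≤ G * (exp (l * t) * ((1 / l) ^ α * Real.Gamma α)) := by
  set N := ⌊t / h⌋₊ with hN
  have hNt : (N : ℝ) * h ≤ t := by
    have := Nat.floor_le (div_nonneg ht0 hh.le)
    rwa [le_div_iff₀ hh] at this
  have hNt' : t ≤ ((N : ℝ) + 1) * h := by
    have := (Nat.lt_floor_add_one (t / h)).le
    rwa [div_le_iff₀ hh] at this
  have key : ∀ (k : ℕ) (u v : ℝ), 0 ≤ u → u ≤ v → v ≤ t → t - u ≤ ((k : ℝ) + 1) * h →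
      ‖(h ^ (α - 1) : ℝ) • (sW (1 - α) k • (y v - y u))‖
        ≤ G * ∫ τ in u..v, (t - τ) ^ (α - 1) * exp (l * τ) := by
    intro k u v hu huv hv hk
    have hs := sW_nonneg (b := 1 - α) (by linarith [hα.1]) k
    have hp : 0 ≤ h ^ (α - 1) := by positivity
    rw [norm_smul, norm_smul, Real.norm_of_nonneg hs, Real.norm_of_nonneg hp]
    calc h ^ (α - 1) * (sW (1 - α) k * ‖y v - y u‖)
        ≤ h ^ (α - 1) * (sW (1 - α) k * (G * ∫ τ in u..v, exp (l * τ))) := by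
          gcongr
          exact hP u v hu huv (hv.trans htT)
      _ = G * (h ^ (α - 1) * sW (1 - α) k * ∫ τ in u..v, exp (l * τ)) := by ring
      _ ≤ _ := mul_le_mul_of_nonneg_left (seg hα hh huv hv hk) hG
  have ind : ∀ m : ℕ, (m : ℝ) * h ≤ t →
      ‖(h ^ (α - 1) : ℝ) • ∑ k ∈ Finset.range m,
        sW (1 - α) k • (y (t - (k : ℝ) * h) - y (t - ((k + 1 : ℕ) : ℝ) * h))‖
      ≤ G * ∫ τ in (t - (m : ℝ) * h)..t, (t - τ) ^ (α - 1) * exp (l * τ) := by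
    intro m
    induction m with
    | zero => intro _; simp
    | succ m ih =>
      intro hm
      have hm2 : ((m : ℝ) + 1) * h ≤ t := by push_cast at hm; exact hm
      have hm0 : 0 ≤ (m : ℝ) * h := by positivity
      rw [Finset.sum_range_succ, smul_add]
      have a1 := ih (by linarith)
      have a2 := key m (t - ((m + 1 : ℕ) : ℝ) * h) (t - (m : ℝ) * h)
        (by linarith) (by push_cast; linarith) (by linarith) (by push_cast; linarith)
      have a3 := intervalIntegral.integral_add_adjacent_intervals
        (kint (α := α) (l := l) (t := t) hα.1 (t - ((m + 1 : ℕ) : ℝ) * h) (t - (m : ℝ) * h))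
        (kint (α := α) (l := l) (t := t) hα.1 (t - (m : ℝ) * h) t)
      rw [← a3, mul_add]
      refine (norm_add_le _ _).trans ?_
      linarith
  have b1 := ind N hNt
  have b2 := key N 0 (t - (N : ℝ) * h) le_rfl (by linarith)
    (by have : 0 ≤ (N : ℝ) * h := by positivity
        linarith) (by linarith)
  rw [hy0, sub_zero] at b2
  have a3 := intervalIntegral.integral_add_adjacent_intervals
        (kint (α := α) (l := l) (t := t) hα.1 0 (t - (N : ℝ) * h))
        (kint (α := α) (l := l) (t := t) hα.1 (t - (N : ℝ) * h) t)
  have b3 := mul_le_mul_of_nonneg_left (kbound hα.1 hl ht0) hG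
  rw [← a3, mul_add] at b3
  have e : GLdiff (1 - α) h y t = _ := abel_sum (1 - α) (fun j : ℕ => y (t - (j : ℝ) * h)) N
  rw [e, smul_add]
  refine (norm_add_le _ _).trans ?_
  linarith


theorem stmt11 (α T R₀ : ℝ) (hα : α ∈ Ioo (0:ℝ) 1) (hT : 0 < T) (hR₀ : 0 < R₀) (n : ℕ)
    (f : ℝ → Evec n → Evec n)
    (hf1 : ∀ x : Evec n, Measurable fun t => f t x)
    (hf2 : ∀ r > (0:ℝ), ∃ lam > (0:ℝ), ∀ t ∈ Icc (0:ℝ) T, ∀ x y : Evec n,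
      ‖x‖ ≤ r → ‖y‖ ≤ r → ‖f t x - f t y‖ ≤ lam * ‖x - y‖)
    (cf : ℝ) (hcf : 0 < cf)
    (hf3 : ∀ t ∈ Icc (0:ℝ) T, ∀ x : Evec n, ‖f t x‖ ≤ (1 + ‖x‖) * cf) :
    ∃ L : ℝ, 0 < L ∧ ∀ (x₀ : Evec n) (h : ℝ) (y : ℝ → Evec n), ‖x₀‖ ≤ R₀ → 0 < h →
      IsApproxSol α T h f x₀ y → LipschitzOnWith L.toNNReal y (Icc (0:ℝ) T) := by
  have hΓ := Real.Gamma_pos_of_pos hα.1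
  set q : ℝ := 2 * cf * Real.Gamma α with hq
  have hq0 : 0 < q := by positivity
  set l : ℝ := q ^ (1 / α) with hl
  have hl0 : 0 < l := by positivity
  have hlα : (1 / l) ^ α * Real.Gamma α * cf = 1 / 2 := by
    rw [one_div, Real.inv_rpow hl0.le, hl, ← Real.rpow_mul hq0.le, one_div,
      inv_mul_cancel₀ hα.1.ne', Real.rpow_one, hq]
    field_simp
  set A : ℝ := (1 + R₀) * cf with hA
  have hA0 : 0 < A := by positivity
  refine ⟨(2 * A + 1) * exp (l * T), by positivity, ?_⟩
  intro x₀ h y hx₀ hh ⟨⟨K, hK⟩, hy0, hode⟩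
  have conv : ∀ G : ℝ, 0 ≤ G →
      (∀ u v, 0 ≤ u → u ≤ v → v ≤ T → ‖y v - y u‖ ≤ G * ∫ τ in u..v, exp (l * τ)) →
      (∀ u v, 0 ≤ u → u ≤ v → v ≤ T → ‖y v - y u‖ ≤ (A + G / 2) * ∫ τ in u..v, exp (l * τ)) := by
    intro G hG hP u v hu huv hv
    rw [← intervalIntegral.integral_const_mul]
    refine lip_int hK (by fun_prop) ?_ hu huv hv
    filter_upwards [hode, ae_restrict_mem measurableSet_Icc] with t ht htm
    refine ⟨_, ht, (hf3 t htm _).trans ?_⟩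
    have hb := GL_bound hα hl0 hh hG hy0 hP htm.1 htm.2
    have h1 := norm_add_le x₀ ((h ^ (α - 1) : ℝ) • GLdiff (1 - α) h y t)
    have he : 1 ≤ exp (l * t) := Real.one_le_exp (mul_nonneg hl0.le htm.1)
    calc (1 + ‖x₀ + (h ^ (α - 1) : ℝ) • GLdiff (1 - α) h y t‖) * cf
        ≤ (1 + (R₀ + G * (exp (l * t) * ((1 / l) ^ α * Real.Gamma α)))) * cf := by
          gcongr
          linarith
      _ = A + G * exp (l * t) * ((1 / l) ^ α * Real.Gamma α * cf) := by rw [hA]; ring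
      _ = A * 1 + G / 2 * exp (l * t) := by rw [hlα]; ring
      _ ≤ A * exp (l * t) + G / 2 * exp (l * t) := by gcongr
      _ = _ := by ring
  have iter : ∀ k : ℕ, ∀ u v, 0 ≤ u → u ≤ v → v ≤ T →
      ‖y v - y u‖ ≤ (2 * A + K / 2 ^ k) * ∫ τ in u..v, exp (l * τ) := by
    intro k
    induction k with
    | zero =>
      intro u v hu huv hv
      have h1 := hK.dist_le_mul v ⟨by linarith, hv⟩ u ⟨hu, by linarith⟩
      rw [dist_eq_norm, Real.dist_eq, abs_of_nonneg (by linarith)] at h1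
      have h2 : v - u ≤ ∫ τ in u..v, exp (l * τ) := by
        have : ∫ τ in u..v, (1:ℝ) = v - u := by simp
        rw [← this]
        apply intervalIntegral.integral_mono_on huv (by simp)
        · exact (by fun_prop : Continuous fun τ => exp (l * τ)).intervalIntegrable _ _
        · intro τ hτ
          exact Real.one_le_exp (mul_nonneg hl0.le (by linarith [hτ.1]))
      calc ‖y v - y u‖ ≤ K * (v - u) := h1
        _ ≤ (2 * A + K / 2 ^ 0) * (v - u) := by
          apply mul_le_mul_of_nonneg_right _ (by linarith)
          simp; linarith
        _ ≤ _ := by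
          apply mul_le_mul_of_nonneg_left h2
          positivity
    | succ k ih =>
      have := conv _ (by positivity) ih
      have e : A + (2 * A + (K : ℝ) / 2 ^ k) / 2 = 2 * A + K / 2 ^ (k + 1) := by
        rw [pow_succ]; field_simp; ring
      rwa [e] at this
  obtain ⟨k, hk⟩ := pow_unbounded_of_one_lt (K : ℝ) (one_lt_two)
  have hk1 : (K : ℝ) / 2 ^ k ≤ 1 := by
    rw [div_le_one (by positivity)]; exact hk.le
  have fin : ∀ u v, 0 ≤ u → u ≤ v → v ≤ T →
      ‖y v - y u‖ ≤ (2 * A + 1) * exp (l * T) * (v - u) := by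
    intro u v hu huv hv
    have h2 : ∫ τ in u..v, exp (l * τ) ≤ exp (l * T) * (v - u) := by
      have : ∫ τ in u..v, exp (l * T) = exp (l * T) * (v - u) := by simp [mul_comm]
      rw [← this]
      apply intervalIntegral.integral_mono_on huv _ (by simp)
      · intro τ hτ
        gcongr
        linarith [hτ.2]
      · exact (by fun_prop : Continuous fun τ => exp (l * τ)).intervalIntegrable _ _
    have h3 : 0 ≤ v - u := by linarith
    calc _ ≤ _ := iter k u v hu huv hv
      _ ≤ (2 * A + K / 2 ^ k) * (exp (l * T) * (v - u)) := by gcongr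
      _ ≤ (2 * A + 1) * (exp (l * T) * (v - u)) := by gcongr
      _ = _ := by ring
  apply LipschitzOnWith.of_dist_le_mul
  intro a ha b hb
  rw [Real.coe_toNNReal _ (by positivity), dist_eq_norm, Real.dist_eq]
  rcases le_total a b with hab | hab
  · rw [norm_sub_rev, abs_sub_comm, abs_of_nonneg (by linarith)]
    exact fin a b ha.1 hab hb.2
  · rw [abs_of_nonneg (by linarith)]
    exact fin b a hb.1 hab ha.2
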